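/- For every τ ∈ H and every Schwartz function φ on ℝ, ∫_ℝ F(φ)(x) ω_τ(x) dx = (−iτ)^{-1} ∫_ℝ φ(x) ω_{−1/τ}(x) dx, where F(φ)(x) := ∫_ℝ φ(w) e(wx) dw; that is, the Fourier transform of the tempered distribution induced by ω_τ equals (−iτ)^{-1} times the tempered distribution induced by ω_{−1/τ}. -/

import Mathlib

open Complex MeasureTheory
open scoped Classical

noncomputable section

/-- `e(a) = exp(2πia)`. -/
def e (a : ℂ) : ℂ := Complex.exp (2 * (Real.pi : ℂ) * Complex.I * a)

/-- The Fourier transform `F(g)(x) = ∫ g(w) e(wx) dw`. -/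
def fourierT (g : ℝ → ℂ) (x : ℝ) : ℂ := ∫ w : ℝ, g w * e ((w * x : ℝ))

/-- The operator `E_σ(f)(x) = e(x²σ/2) ∫_0^x e(-w²σ/2) f(w) dw`. -/
def Eop (σ : ℂ) (f : ℝ → ℂ) (x : ℝ) : ℂ :=
  e ((x : ℂ)^2 * σ / 2) * ∫ w in (0:ℝ)..x, e (-(w : ℂ)^2 * σ / 2) * f w

/-- `ω_τ(x) = e(-x²τ/2) ∑_{m ∈ ℤ+1/2, m ≥ |x|} e(m²τ/2 + m/2)`. -/
def omega (τ : ℂ) (x : ℝ) : ℂ :=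
  e (-(x : ℂ)^2 * τ / 2) *
    ∑' m : ℤ, if |x| ≤ (m : ℝ) + 1/2 then
      e (((m : ℂ) + 1/2)^2 / 2 * τ + ((m : ℂ) + 1/2) / 2) else 0

/-- `η³(τ) = -i ∑_{m ∈ ℤ+1/2} m e(m²τ/2 + m/2)`. -/
def eta3 (τ : ℂ) : ℂ :=
  -Complex.I * ∑' m : ℤ, ((m : ℂ) + 1/2) * e (((m : ℂ) + 1/2)^2 / 2 * τ + ((m : ℂ) + 1/2) / 2)

/-- The complementary error function. -/
def erfc (x : ℝ) : ℝ := (2 / Real.sqrt Real.pi) * ∫ t in Set.Ioi x, Real.exp (-t^2)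

/-- `g⁺_τ`. -/
def gplus (τ : ℂ) (x : ℝ) : ℂ :=
  e (-(x : ℂ)^2 * τ / 2) * ((Real.sign x : ℂ) / (Complex.I * eta3 τ)) *
    ∑' m : ℤ, if |x| < (m : ℝ) + 1/2 then
      (((m : ℝ) + 1/2 - |x| : ℝ) : ℂ) * e (((m : ℂ) + 1/2)^2 / 2 * τ + ((m : ℂ) + 1/2) / 2)
    else 0

/-- `g*_τ`. -/
def gstar (τ : ℂ) (x : ℝ) : ℂ :=
  e (-(x : ℂ)^2 * τ / 2) * ((Real.sign x : ℂ) / 2) *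
    (erfc (Real.sqrt (2 * Real.pi * τ.im) * |x|) : ℂ)

/-- `g_τ = g⁺_τ - g*_τ`. -/
def gfun (τ : ℂ) (x : ℝ) : ℂ := gplus τ x - gstar τ x

/-- The operator `ξ_k f = 2i v^k conj(∂f/∂τ̄)`, with `∂/∂τ̄ = (1/2)(∂/∂u + i ∂/∂v)`. -/
def xi (k : ℝ) (f : ℂ → ℂ) (τ : ℂ) : ℂ :=
  2 * Complex.I * ((τ.im ^ k : ℝ) : ℂ) *
    (starRingEnd ℂ) ((1/2 : ℂ) * (fderiv ℝ f τ 1 + Complex.I * fderiv ℝ f τ Complex.I))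

/-- Sum of divisors function `σ₁`. -/
def sigma1 (n : ℕ) : ℕ := ∑ d ∈ Nat.divisors n, d

/-- The weight 2 Eisenstein series `E₂`. -/
def E2 (τ : ℂ) : ℂ := 1 - 24 * ∑' n : ℕ, (sigma1 (n+1) : ℂ) * e ((n + 1 : ℂ) * τ)

/-- `ϑ̃_{N,h}`. -/
def tvtheta (N : ℕ) (h : ℝ) (τ : ℂ) : ℂ :=
  (if ∃ m : ℤ, h = (m : ℝ) + 1/2 then
      e ((h : ℂ) / 2) * E2 τ / (12 * (N : ℂ) * Complex.I * eta3 τ) else 0)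
  + ∑' n : ℤ, gfun τ ((N : ℝ) * n + h)

/-- The Schwartz function `φ_τ(x,y) = √(2v)·x·e(x²τ/2 - y²τ̄/2)`. -/
def Phi (τ : ℂ) (x y : ℝ) : ℂ :=
  (Real.sqrt (2 * τ.im) : ℂ) * (x : ℂ) *
    e ((x : ℂ)^2 * τ / 2 - (y : ℂ)^2 * (starRingEnd ℂ) τ / 2)

/-- The signature (1,1) bilinear form `B((a₁,a₂),(b₁,b₂)) = a₁b₂ + a₂b₁`. -/
def Bform (a b : ℝ × ℝ) : ℝ := a.1 * b.2 + a.2 * b.1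

/-- `Z⁺_t = (t/√2, t⁻¹/√2)`. -/
def Zp (t : ℝ) : ℝ × ℝ := (t / Real.sqrt 2, t⁻¹ / Real.sqrt 2)

/-- `Z⁻_t = (t/√2, -t⁻¹/√2)`. -/
def Zm (t : ℝ) : ℝ × ℝ := (t / Real.sqrt 2, -t⁻¹ / Real.sqrt 2)

end

section
open SchwartzMap Real in
lemma sw_decay (φ : SchwartzMap ℝ ℂ) (k : ℕ) : ∃ C : ℝ, 0 ≤ C ∧ ∀ w : ℝ, (1 + w^2)^k * ‖φ w‖ ≤ C := by
  refine ⟨2 ^ (2*k) * (Finset.Iic (2*k, 0)).sup (fun m : ℕ × ℕ => SchwartzMap.seminorm ℝ m.1 m.2) φ, ?_, fun w => ?_⟩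
  rotate_left
  · have h := SchwartzMap.one_add_le_sup_seminorm_apply (𝕜 := ℝ) (m := (2*k, 0)) (le_refl _) (le_refl _) φ w
    rw [norm_iteratedFDeriv_zero] at h
    refine le_trans ?_ h
    gcongr
    dsimp only
    rw [pow_mul]
    gcongr
    rw [Real.norm_eq_abs]
    nlinarith [abs_nonneg w, sq_abs w]
  · positivity

lemma exp_decay (a : ℝ) (ha : 0 < a) (k : ℕ) : ∃ C : ℝ, 0 ≤ C ∧ ∀ s : ℝ, 0 ≤ s →
    Real.exp (-(a * s)) * (1 + s)^k ≤ C := by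
  refine ⟨Real.exp a * (k.factorial / a^k), by positivity, fun s hs => ?_⟩
  have h := Real.pow_div_factorial_le_exp (x := a * (1 + s)) (by positivity) k
  have h2 : Real.exp (a * (1+s)) = Real.exp a * Real.exp (a * s) := by rw [← Real.exp_add]; ring_nf
  rw [h2, mul_pow, div_le_iff₀ (by positivity)] at h
  rw [Real.exp_neg, inv_mul_le_iff₀ (by positivity), ← mul_div_assoc, ← mul_div_assoc, le_div_iff₀ (by positivity)]
  linarith

lemma gauss_decay (φ : SchwartzMap ℝ ℂ) (a : ℝ) (ha : 0 < a) (k : ℕ) : ∃ C : ℝ, 0 ≤ C ∧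
    ∀ x w : ℝ, |w| ≤ |x| → Real.exp (-(a * (x^2 - w^2))) * ‖φ w‖ ≤ C / (1 + x^2)^k := by
  obtain ⟨A, hA, h1⟩ := sw_decay φ k
  obtain ⟨B, hB, h2⟩ := exp_decay a ha k
  refine ⟨B * A, by positivity, fun x w h => ?_⟩
  have hs : 0 ≤ x^2 - w^2 := by have := sq_le_sq.mpr h; linarith
  rw [le_div_iff₀ (by positivity)]
  have h3 : (1 + x^2)^k ≤ (1 + (x^2-w^2))^k * (1 + w^2)^k := by
    rw [← mul_pow]
    gcongr
    nlinarith [sq_nonneg w]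
  calc _ ≤ Real.exp (-(a * (x^2 - w^2))) * ‖φ w‖ * ((1 + (x^2-w^2))^k * (1 + w^2)^k) := by gcongr
    _ = (Real.exp (-(a * (x^2 - w^2))) * (1 + (x^2-w^2))^k) * ((1 + w^2)^k * ‖φ w‖) := by ring
    _ ≤ _ := mul_le_mul (h2 _ hs) (h1 w) (by positivity) hB

lemma e_add (a b : ℂ) : e (a + b) = e a * e b := by
  simp only [e, mul_add, Complex.exp_add]

lemma norm_e (a : ℂ) : ‖e a‖ = Real.exp (-(2 * Real.pi * a.im)) := by
  simp [e, Complex.norm_exp]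

lemma norm_e_sq (σ : ℂ) (x : ℝ) : ‖e ((x : ℂ)^2 * σ / 2)‖ = Real.exp (-(Real.pi * σ.im * x^2)) := by
  rw [norm_e]
  congr 2
  have : (x : ℂ)^2 * σ / 2 = ((x^2/2 : ℝ) : ℂ) * σ := by push_cast; ring
  rw [this, Complex.im_ofReal_mul]; ring

lemma norm_e_sq_neg (σ : ℂ) (x : ℝ) : ‖e (-(x : ℂ)^2 * σ / 2)‖ = Real.exp (Real.pi * σ.im * x^2) := by
  have := norm_e_sq (-σ) x
  rw [show -(x : ℂ)^2 * σ / 2 = (x : ℂ)^2 * -σ / 2 by ring, this]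
  simp

lemma e_zero : e 0 = 1 := by simp [e]

lemma hasDerivAt_e_sq (σ : ℂ) (x : ℝ) :
    HasDerivAt (fun x : ℝ => e ((x : ℂ)^2 * σ / 2)) (2 * Real.pi * I * σ * x * e ((x : ℂ)^2 * σ / 2)) x := by
  have h : HasDerivAt (fun z : ℂ => e (z^2 * σ / 2)) (2 * Real.pi * I * σ * x * e ((x : ℂ)^2 * σ / 2)) (x : ℂ) := by
    unfold e
    have := (((((hasDerivAt_id (x : ℂ)).pow 2).mul_const σ).div_const 2).const_mul (2 * (Real.pi : ℂ) * I)).cexp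
    refine this.congr_deriv ?_
    simp; ring
  exact h.comp_ofReal

lemma hasDerivAt_e_sq_neg (σ : ℂ) (x : ℝ) :
    HasDerivAt (fun x : ℝ => e (-(x : ℂ)^2 * σ / 2)) (-(2 * Real.pi * I * σ * x) * e (-(x : ℂ)^2 * σ / 2)) x := by
  have := hasDerivAt_e_sq (-σ) x
  have h : ∀ x : ℝ, -(x : ℂ)^2 * σ / 2 = (x : ℂ)^2 * -σ / 2 := fun x => by ring
  simp only [h]
  refine this.congr_deriv ?_
  ring

lemma continuous_e_sq_neg (σ : ℂ) : Continuous (fun x : ℝ => e (-(x : ℂ)^2 * σ / 2)) :=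
  continuous_iff_continuousAt.mpr fun x => (hasDerivAt_e_sq_neg σ x).continuousAt

lemma hasDerivAt_Eop (σ : ℂ) (φ : SchwartzMap ℝ ℂ) (x : ℝ) :
    HasDerivAt (Eop σ φ) (2 * Real.pi * I * σ * (x * Eop σ φ x) + φ x) x := by
  have hc : Continuous (fun w : ℝ => e (-(w : ℂ)^2 * σ / 2) * φ w) :=
    (continuous_e_sq_neg σ).mul φ.continuous
  have h := (hasDerivAt_e_sq σ x).mul (hc.integral_hasStrictDerivAt 0 x).hasDerivAt
  refine h.congr_deriv ?_
  rw [← mul_assoc (e _) (e _), ← e_add]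
  rw [show (x : ℂ)^2 * σ / 2 + -(x:ℂ)^2 * σ / 2 = 0 by ring, e_zero, Eop]
  ring

lemma Eop_decay (σ : ℂ) (hσ : 0 < σ.im) (φ : SchwartzMap ℝ ℂ) (k : ℕ) : ∃ C : ℝ, 0 ≤ C ∧
    ∀ x : ℝ, ‖Eop σ φ x‖ ≤ C / (1 + x^2)^k := by
  obtain ⟨C, hC, h⟩ := gauss_decay φ (Real.pi * σ.im) (by positivity) (k+1)
  refine ⟨C, hC, fun x => ?_⟩
  rw [Eop, ← intervalIntegral.integral_const_mul]
  have := intervalIntegral.norm_integral_le_of_norm_le_const (a := 0) (b := x)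
    (f := fun w : ℝ => e ((x : ℂ)^2 * σ / 2) * (e (-(w : ℂ)^2 * σ / 2) * φ w)) (C := C / (1 + x^2)^(k+1)) (by
      intro w hw
      have hw' : |w| ≤ |x| := by
        rw [Set.mem_uIoc] at hw
        rcases hw with hw | hw
        · rw [abs_of_pos hw.1, abs_of_pos (by linarith)]; exact hw.2
        · rw [abs_of_nonpos hw.2, abs_of_neg (by linarith)]; linarith
      refine le_trans (le_of_eq ?_) (h x w hw')
      rw [norm_mul, norm_mul, norm_e_sq, norm_e_sq_neg, ← mul_assoc, ← Real.exp_add]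
      ring_nf)
  refine this.trans ?_
  rw [sub_zero, pow_succ, div_mul_eq_mul_div, div_le_div_iff₀ (by positivity) (by positivity)]
  have : |x| ≤ 1 + x^2 := by nlinarith [sq_abs x, abs_nonneg x]
  have h2 : 0 ≤ C * (1 + x^2)^k := by positivity
  nlinarith [mul_le_mul_of_nonneg_left this h2]

lemma Eop_contDiff (σ : ℂ) (φ : SchwartzMap ℝ ℂ) (n : ℕ) : ContDiff ℝ n (Eop σ φ) := by
  induction n with
  | zero =>
    exact contDiff_zero.mpr (continuous_iff_continuousAt.mpr fun x => (hasDerivAt_Eop σ φ x).continuousAt)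
  | succ n ih =>
    push_cast
    rw [contDiff_succ_iff_deriv]
    refine ⟨fun x => (hasDerivAt_Eop σ φ x).differentiableAt, by simp, ?_⟩
    have : deriv (Eop σ φ) = fun x : ℝ => (2 * Real.pi * I * σ * (x * Eop σ φ x) + φ x) := by
      ext x; exact (hasDerivAt_Eop σ φ x).deriv
    rw [this]
    exact (contDiff_const.mul (Complex.ofRealCLM.contDiff.mul ih)).add (φ.smooth n)

lemma Eop_iter (σ : ℂ) (φ : SchwartzMap ℝ ℂ) (n : ℕ) (x : ℝ) :
    iteratedDeriv (n+1) (Eop σ φ) x = 2 * Real.pi * I * σ * (x * iteratedDeriv n (Eop σ φ) x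
      + n * iteratedDeriv (n-1) (Eop σ φ) x) + iteratedDeriv n φ x := by
  have hd : ∀ (m : ℕ) (y : ℝ), HasDerivAt (iteratedDeriv m (Eop σ φ)) (iteratedDeriv (m+1) (Eop σ φ) y) y := by
    intro m y
    rw [iteratedDeriv_succ]
    exact ((Eop_contDiff σ φ (m+1)).differentiable_iteratedDeriv m (by norm_cast; simp) y).hasDerivAt
  have hd' : ∀ (m : ℕ) (y : ℝ), HasDerivAt (iteratedDeriv m φ) (iteratedDeriv (m+1) φ y) y := by
    intro m y
    rw [iteratedDeriv_succ]
    exact (((φ.smooth (m+1))).differentiable_iteratedDeriv m (by norm_cast; simp) y).hasDerivAt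
  induction n generalizing x with
  | zero => simp [iteratedDeriv_one, (hasDerivAt_Eop σ φ x).deriv]
  | succ n ih =>
    have hx : HasDerivAt (fun x : ℝ => (x : ℂ)) 1 x := (hasDerivAt_id (x:ℂ)).comp_ofReal
    have h2 : HasDerivAt (fun x : ℝ => (n : ℂ) * iteratedDeriv (n-1) (Eop σ φ) x)
        ((n : ℂ) * iteratedDeriv n (Eop σ φ) x) x := by
      rcases n with _ | n
      · simpa using hasDerivAt_const x (0:ℂ)
      · exact (hd n x).const_mul _
    rw [iteratedDeriv_succ]
    conv_lhs => rw [funext ih]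
    refine (((((hx.mul (hd n x)).add h2).const_mul _).add (hd' n x)).deriv).trans ?_
    push_cast
    ring

lemma Eop_iter_decay (σ : ℂ) (hσ : 0 < σ.im) (φ : SchwartzMap ℝ ℂ) (n : ℕ) : ∀ k : ℕ, ∃ C : ℝ,
    ∀ x : ℝ, ‖x‖^k * ‖iteratedDeriv n (Eop σ φ) x‖ ≤ C := by
  induction n using Nat.strong_induction_on with
  | _ n ih =>
    intro k
    rcases n with _ | n
    · obtain ⟨C, hC, h⟩ := Eop_decay σ hσ φ k
      refine ⟨C, fun x => ?_⟩
      have hh := h x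
      rw [le_div_iff₀ (by positivity)] at hh
      rw [iteratedDeriv_zero, mul_comm]
      refine le_trans ?_ hh
      gcongr
      rw [Real.norm_eq_abs]
      nlinarith [sq_abs x, abs_nonneg x]
    · obtain ⟨A, hA⟩ := ih n (by omega) (k+1)
      obtain ⟨B, hB⟩ := ih (n-1) (by omega) k
      obtain ⟨D, hD⟩ := φ.decay' k n
      refine ⟨‖2 * Real.pi * I * σ‖ * (A + n * B) + D, fun x => ?_⟩
      rw [Eop_iter]
      have hD' := hD x
      rw [norm_iteratedFDeriv_eq_norm_iteratedDeriv] at hD'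
      have hA' := hA x
      have hB' := hB x
      calc _ ≤ ‖x‖^k * (‖2 * Real.pi * I * σ‖ * (‖x‖ * ‖iteratedDeriv n (Eop σ φ) x‖ + n * ‖iteratedDeriv (n-1) (Eop σ φ) x‖) + ‖iteratedDeriv n φ x‖) := by
            gcongr
            refine (norm_add_le _ _).trans ?_
            rw [norm_mul]
            gcongr
            refine (norm_add_le _ _).trans ?_
            simp
        _ = ‖2 * Real.pi * I * σ‖ * (‖x‖^(k+1) * ‖iteratedDeriv n (Eop σ φ) x‖ + n * (‖x‖^k * ‖iteratedDeriv (n-1) (Eop σ φ) x‖)) + ‖x‖^k * ‖iteratedDeriv n φ x‖ := by ring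
        _ ≤ _ := by gcongr; exact hD'

lemma exists_schwartz (σ : ℂ) (hσ : 0 < σ.im) (φ : SchwartzMap ℝ ℂ) : ∃ ψ : SchwartzMap ℝ ℂ,
    ∀ x, φ x = deriv ψ x - 2 * Real.pi * I * σ * (x * ψ x) := by
  refine ⟨⟨Eop σ φ, contDiff_infty.mpr (Eop_contDiff σ φ), fun k n => ?_⟩, fun x => ?_⟩
  · obtain ⟨C, h⟩ := Eop_iter_decay σ hσ φ n k
    refine ⟨C, fun x => ?_⟩
    rw [norm_iteratedFDeriv_eq_norm_iteratedDeriv]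
    exact h x
  · change φ x = deriv (Eop σ φ) x - 2 * Real.pi * I * σ * (x * Eop σ φ x)
    rw [(hasDerivAt_Eop σ φ x).deriv]; ring
end
section
lemma summable_half : Summable (fun m : ℤ => 1 / (1 + ((m : ℝ) + 1/2)^2)) := by
  have h := (Real.summable_one_div_int_pow (p := 2)).mpr (by norm_num)
  refine Summable.of_norm_bounded_eventually (h.mul_left 2) ?_
  rw [Filter.eventually_cofinite]
  refine (Set.finite_singleton (0:ℤ)).subset fun m hm => ?_
  by_contra h0
  apply hm
  have h1 : (m : ℝ) ≠ 0 := by exact_mod_cast h0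
  have h2 : 0 < (m:ℝ)^2 := by positivity
  rw [Real.norm_of_nonneg (by positivity), mul_one_div, div_le_div_iff₀ (by positivity) h2]
  nlinarith [sq_nonneg ((m:ℝ)+1)]

lemma norm_e_real (a : ℝ) : ‖e (a : ℂ)‖ = 1 := by simp [norm_e]

lemma norm_cc (m : ℤ) : ‖e (((m:ℂ) + 1/2)/2)‖ = 1 := by
  rw [show ((m:ℂ) + 1/2)/2 = ((((m:ℝ)+1/2)/2 : ℝ) : ℂ) by push_cast; ring, norm_e_real]

lemma sw_summable (f : SchwartzMap ℝ ℂ) (c : ℤ → ℂ) (hc : ∀ m, ‖c m‖ = 1) :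
    Summable (fun m : ℤ => c m * f ((m:ℝ) + 1/2)) := by
  obtain ⟨C, hC, h⟩ := sw_decay f 1
  refine Summable.of_norm_bounded (summable_half.mul_left C) fun m => ?_
  rw [norm_mul, hc, one_mul, mul_one_div, le_div_iff₀ (by positivity), mul_comm]
  simpa using h ((m:ℝ)+1/2)

lemma e_int (n : ℤ) : e n = 1 := by
  rw [e, Complex.exp_eq_one_iff]
  exact ⟨n, by ring⟩

noncomputable def kE (σ : ℂ) (m : ℤ) : ℂ := e (((m : ℂ) + 1/2)^2 / 2 * σ + ((m : ℂ) + 1/2) / 2)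

noncomputable def kG (σ : ℂ) (φ : ℝ → ℂ) (m : ℤ) (x : ℝ) : ℂ := φ x * (e (-(x : ℂ)^2 * σ / 2) * kE σ m)

noncomputable def kF (σ : ℂ) (φ : ℝ → ℂ) (m : ℤ) : ℝ → ℂ :=
  (Set.Icc (-((m:ℝ)+1/2)) ((m:ℝ)+1/2)).indicator (kG σ φ m)

lemma kG_cont (σ : ℂ) (φ : SchwartzMap ℝ ℂ) (m : ℤ) : Continuous (kG σ φ m) :=
  φ.continuous.mul ((continuous_e_sq_neg σ).mul continuous_const)

lemma kF_int (σ : ℂ) (φ : SchwartzMap ℝ ℂ) (m : ℤ) : Integrable (kF σ φ m) :=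
  ((kG_cont σ φ m).continuousOn.integrableOn_Icc).integrable_indicator measurableSet_Icc

lemma kF_sum (σ : ℂ) (φ : SchwartzMap ℝ ℂ) (x : ℝ) : φ x * omega σ x = ∑' m, kF σ φ m x := by
  rw [omega, ← tsum_mul_left, ← tsum_mul_left]
  congr 1; ext m
  simp only [kF, kG, Set.indicator_apply, Set.mem_Icc, ← abs_le]
  split_ifs <;> simp [kE]

lemma kE_norm (σ : ℂ) (m : ℤ) : ‖kE σ m‖ = Real.exp (-(Real.pi * σ.im * ((m:ℝ)+1/2)^2)) := by
  have := norm_e_sq σ ((m:ℝ)+1/2)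
  rw [kE, e_add, norm_mul, norm_cc, mul_one, ← this]
  congr 2; push_cast; ring

lemma kF_summable (σ : ℂ) (hσ : 0 < σ.im) (φ : SchwartzMap ℝ ℂ) :
    Summable fun m => ∫ x, ‖kF σ φ m x‖ := by
  obtain ⟨C, hC, hb⟩ := gauss_decay φ (Real.pi * σ.im) (by positivity) 2
  have hGn : ∀ (m : ℤ) (x : ℝ), |x| ≤ (m:ℝ)+1/2 → ‖kG σ φ m x‖ ≤ C / (1 + ((m:ℝ)+1/2)^2)^2 := by
    intro m x hx
    refine le_trans (le_of_eq ?_) (hb ((m:ℝ)+1/2) x (hx.trans (le_abs_self _)))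
    rw [kG, norm_mul, norm_mul, kE_norm, norm_e_sq_neg, ← Real.exp_add, mul_comm]
    congr 2; ring
  refine Summable.of_nonneg_of_le (fun m => integral_nonneg fun x => norm_nonneg _) (fun m => ?_) (summable_half.mul_left C)
  have e1 : (fun x => ‖kF σ φ m x‖) = (Set.Icc (-((m:ℝ)+1/2)) ((m:ℝ)+1/2)).indicator (fun x => ‖kG σ φ m x‖) := by
    ext x; rw [kF, norm_indicator_eq_indicator_norm]
  rw [e1, integral_indicator measurableSet_Icc]
  have h2 : ∀ x ∈ Set.Icc (-((m:ℝ)+1/2)) ((m:ℝ)+1/2), ‖(‖kG σ φ m x‖)‖ ≤ C / (1 + ((m:ℝ)+1/2)^2)^2 := by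
    intro x hx
    rw [norm_norm]
    exact hGn m x (abs_le.mpr hx)
  have h3 := norm_setIntegral_le_of_norm_le_const (μ := volume) (by simp) h2
  refine (le_abs_self _).trans (h3.trans ?_)
  have h4 : volume.real (Set.Icc (-((m:ℝ)+1/2)) ((m:ℝ)+1/2)) ≤ 1 + ((m:ℝ)+1/2)^2 := by
    rw [Measure.real, Real.volume_Icc, ENNReal.toReal_ofReal']
    apply max_le
    · nlinarith [sq_nonneg ((m:ℝ)+1/2-1)]
    · positivity
  calc _ ≤ C / (1 + ((m:ℝ)+1/2)^2)^2 * (1 + ((m:ℝ)+1/2)^2) := by gcongr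
    _ = _ := by field_simp

lemma kF_val (σ : ℂ) (φ ψ : SchwartzMap ℝ ℂ)
    (hφ : ∀ x, φ x = deriv ψ x - 2 * Real.pi * I * σ * (x * ψ x)) (n : ℕ) :
    ∫ x, kF σ φ n x = e ((((n:ℤ):ℂ) + 1/2)/2) * ψ (((n:ℤ):ℝ) + 1/2)
      + e ((((-((n:ℤ)+1) : ℤ):ℂ) + 1/2)/2) * ψ (((-((n:ℤ)+1) : ℤ) : ℝ) + 1/2) := by
  rw [kF, integral_indicator measurableSet_Icc, integral_Icc_eq_integral_Ioc,
    ← intervalIntegral.integral_of_le (by push_cast; have : (0:ℝ) ≤ n := n.cast_nonneg; linarith)]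
  have hd : ∀ x : ℝ, HasDerivAt (fun x : ℝ => ψ x * (e (-(x : ℂ)^2 * σ / 2) * kE σ n)) (kG σ φ n x) x := by
    intro x
    have := (ψ.differentiableAt (x := x)).hasDerivAt.mul ((hasDerivAt_e_sq_neg σ x).mul_const (kE σ n))
    refine this.congr_deriv ?_
    rw [kG, hφ]; ring
  rw [intervalIntegral.integral_eq_sub_of_hasDerivAt (fun x _ => hd x) ((kG_cont σ φ n).intervalIntegrable _ _)]
  have q1 : e (-((((n:ℤ):ℝ)+1/2 : ℝ) : ℂ)^2 * σ / 2) * kE σ n = e ((((n:ℤ):ℂ) + 1/2)/2) := by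
    rw [kE, ← e_add]; congr 1; push_cast; ring
  have q2 : e (-((-(((n:ℤ):ℝ)+1/2) : ℝ) : ℂ)^2 * σ / 2) * kE σ n = e ((((n:ℤ):ℂ) + 1/2)/2) := by
    rw [← q1]; congr 2; push_cast; ring
  rw [q1, q2]
  have q3 : e ((((-((n:ℤ)+1) : ℤ):ℂ) + 1/2)/2) = - e ((((n:ℤ):ℂ) + 1/2)/2) := by
    have : (((-((n:ℤ)+1) : ℤ):ℂ) + 1/2)/2 = (((n:ℤ):ℂ) + 1/2)/2 + ((-(n+1) : ℤ) : ℂ) + 1/2 := by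
      push_cast; ring
    rw [this, e_add, e_add, e_int]
    have : e (1/2) = -1 := by
      rw [e, ← Complex.exp_pi_mul_I]; congr 1; ring
    rw [this]; ring
  rw [q3, show (((-((n:ℤ)+1) : ℤ) : ℝ) + 1/2) = -(((n:ℤ):ℝ)+1/2) by push_cast; ring]
  ring

lemma kF_val_neg (σ : ℂ) (φ : ℝ → ℂ) (n : ℕ) : ∫ x, kF σ φ (-((n:ℤ)+1)) x = 0 := by
  have : kF σ φ (-((n:ℤ)+1)) = fun _ => 0 := by
    rw [kF, Set.Icc_eq_empty, Set.indicator_empty]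
    push_cast; have : (0:ℝ) ≤ n := n.cast_nonneg
    linarith
  rw [this, integral_zero]

lemma tsum_fold (a b : ℤ → ℂ) (ha : Summable a) (hb : Summable b)
    (h1 : ∀ n : ℕ, a (n : ℤ) = b (n : ℤ) + b (-((n:ℤ)+1))) (h2 : ∀ n : ℕ, a (-((n:ℤ)+1)) = 0) :
    ∑' m, a m = ∑' m, b m := by
  have i1 : Function.Injective (fun n : ℕ => (n : ℤ)) := Nat.cast_injective
  have i2 : Function.Injective (fun n : ℕ => -((n : ℤ)+1)) := fun a b h => by
    simp only at h; omega
  have b1 : Summable (fun n : ℕ => b (n : ℤ)) := hb.comp_injective i1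
  have b2 : Summable (fun n : ℕ => b (-((n:ℤ)+1))) := hb.comp_injective i2
  have a1 : Summable (fun n : ℕ => a (n : ℤ)) := ha.comp_injective i1
  have a2 : Summable (fun n : ℕ => a (-((n:ℤ)+1))) := ha.comp_injective i2
  rw [tsum_of_nat_of_neg_add_one a1 a2, tsum_of_nat_of_neg_add_one b1 b2, ← b1.tsum_add b2]
  simp only [h1, h2, tsum_zero, add_zero]

lemma key (σ : ℂ) (hσ : 0 < σ.im) (φ ψ : SchwartzMap ℝ ℂ)
    (hφ : ∀ x, φ x = deriv ψ x - 2 * Real.pi * I * σ * (x * ψ x)) :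
    ∫ x, φ x * omega σ x = ∑' m : ℤ, e (((m:ℂ) + 1/2)/2) * ψ ((m:ℝ) + 1/2) := by
  have h2 := hasSum_integral_of_summable_integral_norm (kF_int σ φ) (kF_summable σ hσ φ)
  simp only [kF_sum]
  rw [← h2.tsum_eq]
  exact tsum_fold _ _ h2.summable (sw_summable ψ _ norm_cc) (kF_val σ φ ψ hφ) (kF_val_neg σ φ)
end
section
open FourierTransform SchwartzMap

lemma fourierT_eq (g : ℝ → ℂ) (x : ℝ) : fourierT g x = 𝓕 g (-x) := by
  rw [fourierT, Real.fourier_real_eq_integral_exp_smul]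
  congr 1; ext w
  rw [smul_eq_mul, mul_comm, e]
  congr 2; push_cast; ring

lemma poisson_half (ψ : SchwartzMap ℝ ℂ) :
    ∑' m : ℤ, e (((m:ℂ) + 1/2)/2) * fourierT ψ ((m:ℝ) + 1/2) =
      I * ∑' m : ℤ, e (((m:ℂ) + 1/2)/2) * ψ ((m:ℝ) + 1/2) := by
  set f : ℝ → ℂ := fun x => e ((x / 2 : ℝ) : ℂ) * ψ x with hf
  have he : Continuous (fun x : ℝ => e ((x / 2 : ℝ) : ℂ)) := by unfold e; fun_prop
  have hc : Continuous f := he.mul ψ.continuous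
  have hFf : ∀ n : ℤ, 𝓕 f n = fourierT ψ (((-n : ℤ) : ℝ) + 1/2) := by
    intro n
    rw [fourierT, Real.fourier_real_eq_integral_exp_smul]
    congr 1; ext w
    simp only [hf]
    rw [smul_eq_mul, mul_comm (ψ w), ← mul_assoc]
    congr 1
    rw [show cexp (↑(-2 * Real.pi * w * n) * I) = e (-(w * n : ℝ)) by rw [e]; congr 1; push_cast; ring, ← e_add]
    congr 1; push_cast; ring
  have hsum : Summable (fun m : ℤ => fourierT ψ ((m:ℝ) + 1/2)) := by
    have := sw_summable (𝓕⁻ ψ) (fun _ => 1) (by simp)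
    refine this.congr fun m => ?_
    rw [fourierT_eq, one_mul, SchwartzMap.fourierInv_coe, Real.fourierInv_eq_fourier_neg]
  have hO : f =O[Filter.cocompact ℝ] (fun x : ℝ => |x| ^ (-2 : ℝ)) := by
    refine (Asymptotics.IsBigO.of_norm_eventuallyLE (Filter.Eventually.of_forall fun x => ?_)).trans (ψ.isBigO_cocompact_rpow (-2)).norm_left
    simp only [hf, norm_mul, norm_e_real, one_mul, norm_norm, le_refl]
  have hP := Real.tsum_eq_tsum_fourier_of_rpow_decay_of_summable hc (b := 2) (by norm_num) hO (by
    simp only [hFf]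
    exact hsum.comp_injective neg_injective) (1/2)
  have h1 : ∀ n : ℤ, f (1/2 + n) = e (((n:ℂ) + 1/2)/2) * ψ ((n:ℝ) + 1/2) := by
    intro n
    simp only [hf]
    rw [add_comm (1/2 : ℝ)]
    push_cast; rfl
  have h2 : ∀ n : ℤ, 𝓕 f n * fourier n (((1/2 : ℝ)) : UnitAddCircle)
      = -I * (e ((((-n : ℤ):ℂ) + 1/2)/2) * fourierT ψ (((-n : ℤ) : ℝ) + 1/2)) := by
    intro n
    rw [hFf, fourier_coe_apply]
    have q1 : cexp (2 * Real.pi * I * n * ((1/2 : ℝ) : ℂ) / ((1:ℝ):ℂ)) = e ((n:ℂ)/2) := by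
      rw [e]; congr 1; push_cast; ring
    have q2 : e ((((-n : ℤ):ℂ) + 1/2)/2) = I * e ((n:ℂ)/2) := by
      rw [show (((-n : ℤ):ℂ) + 1/2)/2 = 1/4 + ((-n : ℤ) : ℂ) + (n:ℂ)/2 by push_cast; ring, e_add, e_add, e_int]
      have : e (1/4) = I := by
        rw [e, show 2 * (Real.pi : ℂ) * I * (1/4) = Real.pi / 2 * I by ring, Complex.exp_pi_div_two_mul_I]
      rw [this, mul_one]
    rw [q1, q2]
    linear_combination ((e ((n:ℂ)/2) * fourierT ψ (((-n : ℤ) : ℝ) + 1/2))) * Complex.I_sq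
  simp only [h1, h2] at hP
  have hneg := (Equiv.neg ℤ).tsum_eq (fun m : ℤ => e (((m:ℂ) + 1/2)/2) * fourierT ψ ((m:ℝ) + 1/2))
  simp only [Equiv.neg_apply] at hneg
  rw [tsum_mul_left, hneg] at hP
  rw [hP]
  linear_combination ((∑' m : ℤ, e (((m:ℂ) + 1/2)/2) * fourierT ψ ((m:ℝ) + 1/2))) * Complex.I_sq
end
section
open FourierTransform SchwartzMap

lemma fourierT_schwartz (ψ : SchwartzMap ℝ ℂ) (x : ℝ) : (𝓕⁻ ψ) x = fourierT ψ x := by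
  rw [fourierT_eq, SchwartzMap.fourierInv_coe, Real.fourierInv_eq_fourier_neg]

lemma fourierT_ode (σ : ℂ) (φ ψ : SchwartzMap ℝ ℂ)
    (hφ : ∀ x, φ x = deriv ψ x - 2 * Real.pi * I * σ * (x * ψ x)) (y : ℝ) :
    fourierT φ y = -(2 * Real.pi * I * y) * (𝓕⁻ ψ : SchwartzMap ℝ ℂ) y - σ * deriv (𝓕⁻ ψ : SchwartzMap ℝ ℂ) y := by
  have i1 : Integrable (deriv ψ) := (derivCLM ℝ ℂ ψ).integrable
  have i2 : Integrable (fun x : ℝ => x • ψ x) := by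
    have hg : Function.HasTemperateGrowth (fun x : ℝ => x) := by fun_prop
    have := (smulLeftCLM ℂ (fun x : ℝ => x) ψ).integrable (μ := volume)
    rwa [smulLeftCLM_apply hg] at this
  have d1 := congrFun (Real.fourier_deriv ψ.integrable ψ.differentiable i1) (-y)
  have d2 := Real.hasDerivAt_fourier ψ.integrable i2 (-y)
  have d3 : deriv (𝓕⁻ ψ : SchwartzMap ℝ ℂ) y = - 𝓕 (fun x : ℝ ↦ (-2 * Real.pi * I * x) • ψ x) (-y) := by
    have : (⇑(𝓕⁻ ψ : SchwartzMap ℝ ℂ) : ℝ → ℂ) = fun x => 𝓕 (ψ : ℝ → ℂ) (-x) := by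
      ext x; rw [fourierT_schwartz, fourierT_eq]
    rw [this]
    refine (d2.scomp y (hasDerivAt_neg y)).deriv.trans ?_
    simp
  rw [d3, fourierT_schwartz, fourierT_eq, fourierT_eq]
  have e1 : (φ : ℝ → ℂ) = deriv ψ + σ • (fun x : ℝ ↦ (-2 * Real.pi * I * x) • ψ x) := by
    ext x; simp [hφ]; ring
  have i3 : Integrable (fun x : ℝ ↦ (-2 * Real.pi * I * x) • ψ x) := by
    refine (i2.const_mul (-2 * Real.pi * I)).congr (Filter.Eventually.of_forall fun x => ?_)
    simp; ring
  rw [e1]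
  have lin : 𝓕 (deriv ψ + σ • (fun x : ℝ ↦ (-2 * Real.pi * I * x) • ψ x)) (-y)
     = 𝓕 (deriv ψ) (-y) + σ * 𝓕 (fun x : ℝ ↦ (-2 * Real.pi * I * x) • ψ x) (-y) := by
    rw [← fourierT_eq, ← fourierT_eq, ← fourierT_eq]
    simp only [fourierT, Pi.add_apply, Pi.smul_apply]
    have hn : ∀ (g : ℝ → ℂ), Integrable g → Integrable (fun w => g w * e ((w * y : ℝ))) := by
      intro g hg
      refine hg.mul_bdd (c := 1) ?_ (Filter.Eventually.of_forall fun w => (norm_e_real _).le)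
      apply Continuous.aestronglyMeasurable
      unfold e; fun_prop
    rw [← integral_const_mul, ← integral_add (hn _ i1) ((hn _ i3).const_mul σ)]
    congr 1; ext w
    simp only [smul_eq_mul]; ring
  rw [lin, d1]
  simp
end
/-- `F(I(ω_τ)) = (-iτ)⁻¹ I(ω_{-1/τ})`. -/
theorem omega_fourier (τ : ℂ) (hτ : 0 < τ.im) (φ : SchwartzMap ℝ ℂ) :
    (∫ x : ℝ, fourierT (φ : ℝ → ℂ) x * omega τ x) =
      (-Complex.I * τ)⁻¹ * ∫ x : ℝ, φ x * omega (-1/τ) x := by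
  have hτ0 : τ ≠ 0 := by rintro rfl; simp at hτ
  have hσ : 0 < (-1/τ).im := by
    rw [neg_div, Complex.neg_im, one_div, Complex.inv_im, neg_div, neg_neg]
    exact div_pos hτ (Complex.normSq_pos.mpr hτ0)
  obtain ⟨ψ, hψ⟩ := exists_schwartz (-1/τ) hσ φ
  rw [key _ hσ φ ψ hψ]
  set χ := FourierTransformInv.fourierInv ψ with hχ
  obtain ⟨θ, hθ⟩ : ∃ θ : SchwartzMap ℝ ℂ, ∀ y, θ y = τ * fourierT φ y :=
    ⟨τ • FourierTransformInv.fourierInv φ, fun y => by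
      rw [smul_apply, fourierT_schwartz, smul_eq_mul]⟩
  have hk := key τ hτ θ χ (fun x => by
    rw [hθ, fourierT_ode _ φ ψ hψ]
    field_simp
    ring)
  have h1 : ∫ x, fourierT φ x * omega τ x = τ⁻¹ * ∫ x, θ x * omega τ x := by
    rw [← integral_const_mul]
    congr 1; ext x
    rw [hθ]; field_simp
  rw [h1, hk]
  simp only [hχ, fourierT_schwartz]
  rw [poisson_half, ← mul_assoc]
  congr 1
  rw [mul_inv, inv_neg, Complex.inv_I]
  ring
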